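/- Under Assumption 2.1 and with the multiple empirical integrals I_k^{(n)} defined from the triangular array, for every k ≥ 0 and all f, g ∈ L²(μ^k), one has 𝔼[I_k^{(n)}(f) · I_k^{(n)}(g)] → k! ⟨f̃, g̃⟩_{L²(μ^k)} as n → ∞, where f̃, g̃ are the symmetrizations of f and g. -/

import Mathlib

open MeasureTheory ProbabilityTheory Filter Topology
open scoped ENNReal NNReal

/-- **Assumption 2.1** of the paper, for data `(μ, a, P)`. -/
def Assumption21 {E : Type*} [MeasurableSpace E] (μ : Measure E) (a : ℕ → ℝ)
    (P : ℕ → Measure E) : Prop :=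
  μ Set.univ = ∞ ∧
  (∀ n : ℕ, 1 ≤ n → 0 < a n) ∧
  Tendsto a atTop atTop ∧
  Tendsto (fun n : ℕ => a n / n) atTop (𝓝 0) ∧
  (∀ B : Set E, MeasurableSet B → ∀ n : ℕ, 1 ≤ n →
    ENNReal.ofReal ((n : ℝ) / a n) * P n B ≤ ENNReal.ofReal (((n : ℝ) + 1) / a (n + 1)) * P (n + 1) B) ∧
  (∀ B : Set E, MeasurableSet B →
    Tendsto (fun n : ℕ => ENNReal.ofReal ((n : ℝ) / a n) * P n B) atTop (𝓝 (μ B)))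

/-- The positive (`true`) and negative (`false`) parts of the signed measure `√a · W_n`. -/
noncomputable def mixMeasure {E : Type*} [MeasurableSpace E] (P : Measure E) (n : ℕ)
    (X : Fin n → E) : Bool → Measure E
  | true => ∑ j : Fin n, Measure.dirac (X j)
  | false => (n : ℝ≥0) • P

/-- The multiple empirical integral `I_k^{(n)}(f)` for one realization `X` of the sample:
the integral of `f` over the off-diagonal set with respect to the `k`-fold product of the
signed measure `W_n = a^{-1/2} (Σ_j δ_{X_j} − n P)`, expanded multilinearly into its
positive and negative parts. -/
noncomputable def empInt {E : Type*} [MeasurableSpace E] (P : Measure E)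
    (n : ℕ) (a : ℝ) (X : Fin n → E) (k : ℕ) (f : (Fin k → E) → ℝ) : ℝ :=
  (Real.sqrt a)⁻¹ ^ k *
    ∑ ε : Fin k → Bool,
      (-1 : ℝ) ^ (Finset.univ.filter fun i => ε i = false).card *
        ∫ u in {u : Fin k → E | Function.Injective u}, f u
          ∂(Measure.pi fun i => mixMeasure P n X (ε i))

/-- The symmetrization `f̃` of a function of `k` variables. -/
noncomputable def symmetrize {E : Type*} (k : ℕ) (f : (Fin k → E) → ℝ) :
    (Fin k → E) → ℝ :=
  fun u => (k.factorial : ℝ)⁻¹ * ∑ σ : Equiv.Perm (Fin k), f (u ∘ σ)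

section Part1

variable {E : Type*} [MeasurableSpace E]

lemma aux_density (μ : Measure E) [SigmaFinite μ] (a : ℕ → ℝ) (P : ℕ → Measure E)
    [∀ n, IsProbabilityMeasure (P n)] (h21 : Assumption21 μ a P) :
    ∃ r : ℕ → E → ℝ, (∀ n, Measurable (r n)) ∧ (∀ n x, 0 ≤ r n x ∧ r n x ≤ 1) ∧
      (∀ n : ℕ, 1 ≤ n → ENNReal.ofReal ((n : ℝ) / a n) • P n
        = μ.withDensity (fun x => ENNReal.ofReal (r n x))) ∧
      ∀ᵐ x ∂μ, Tendsto (fun n => r n x) atTop (𝓝 1) := by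
  obtain ⟨-, -, -, -, hmono, hlim⟩ := h21
  set ν : ℕ → Measure E := fun n => ENNReal.ofReal ((n : ℝ) / a n) • P n with hν
  have hfin : ∀ n, IsFiniteMeasure (ν n) := fun n =>
    Measure.smul_finite _ ENNReal.ofReal_ne_top
  have hmono' : ∀ n, 1 ≤ n → ν n ≤ ν (n+1) := by
    intro n hn
    rw [Measure.le_iff]
    intro s hs
    have := hmono s hs n hn
    simpa [hν] using this
  have hle : ∀ n, 1 ≤ n → ν n ≤ μ := by
    intro n hn
    rw [Measure.le_iff]
    intro s hs
    have h1 : Tendsto (fun m => ν m s) atTop (𝓝 (μ s)) := by simpa [hν] using hlim s hs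
    refine ge_of_tendsto h1 ?_
    filter_upwards [eventually_ge_atTop n] with m hm
    induction m, hm using Nat.le_induction with
    | base => exact le_rfl
    | succ m hm ih => exact ih.trans (hmono' m (hn.trans hm) s)
  have hac : ∀ n, 1 ≤ n → ν n ≪ μ := fun n hn => Measure.absolutelyContinuous_of_le (hle n hn)
  set d : ℕ → E → ℝ≥0∞ := fun n => (ν n).rnDeriv μ with hd
  have hdm : ∀ n, Measurable (d n) := fun n => Measure.measurable_rnDeriv _ _
  have hdw : ∀ n, 1 ≤ n → μ.withDensity (d n) = ν n := fun n hn =>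
    Measure.withDensity_rnDeriv_eq _ _ (hac n hn)
  have hdint : ∀ n, 1 ≤ n → ∀ s, MeasurableSet s → ∫⁻ x in s, d n x ∂μ = ν n s := by
    intro n hn s hs
    rw [← hdw n hn, withDensity_apply _ hs]
  have hd1 : ∀ n, 1 ≤ n → ∀ᵐ x ∂μ, d n x ≤ 1 := by
    intro n hn
    refine ae_le_of_forall_setLIntegral_le_of_sigmaFinite (hdm n) ?_
    intro s hs _
    rw [hdint n hn s hs]
    simpa using hle n hn s
  have hd2 : ∀ n, ∀ᵐ x ∂μ, d (n+1) x ≤ d (n+1+1) x := by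
    intro n
    refine ae_le_of_forall_setLIntegral_le_of_sigmaFinite (hdm _) ?_
    intro s hs _
    rw [hdint _ (by omega) s hs, hdint _ (by omega) s hs]
    exact hmono' _ (by omega) s
  have hsup : (fun x => ⨆ n, d (n+1) x) =ᵐ[μ] fun _ => 1 := by
    refine ae_eq_of_forall_setLIntegral_eq_of_sigmaFinite (by fun_prop) (by fun_prop) ?_
    intro s hs _
    rw [lintegral_iSup_ae (fun n => hdm _) (fun n => ae_restrict_of_ae (hd2 n))]
    simp only [hdint _ (Nat.le_add_left 1 _) s hs]
    have h1 : Tendsto (fun m => ν (m+1) s) atTop (𝓝 (μ s)) := by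
      have : Tendsto (fun m => ν m s) atTop (𝓝 (μ s)) := by simpa [hν] using hlim s hs
      exact this.comp (tendsto_add_atTop_nat 1)
    have h2 : Monotone (fun m => ν (m+1) s) := monotone_nat_of_le_succ
      fun m => hmono' (m+1) (by omega) s
    rw [tendsto_nhds_unique (tendsto_atTop_iSup h2) h1]
    simp
  refine ⟨fun n x => (min (d n x) 1).toReal, fun n => by fun_prop, ?_, ?_, ?_⟩
  · intro n x
    refine ⟨ENNReal.toReal_nonneg, ?_⟩
    have := ENNReal.toReal_mono ENNReal.one_ne_top (min_le_right (d n x) 1)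
    simpa using this
  · intro n hn
    change ν n = _
    rw [← hdw n hn]
    refine withDensity_congr_ae ?_
    filter_upwards [hd1 n hn] with x hx
    rw [min_eq_left hx, ENNReal.ofReal_toReal (ne_top_of_le_ne_top ENNReal.one_ne_top hx)]
  · have h1 : ∀ᵐ x ∂μ, ∀ n, d (n+1) x ≤ 1 := ae_all_iff.2 fun n => hd1 _ (by omega)
    have h2 := ae_all_iff.2 hd2
    filter_upwards [h1, h2, hsup] with x h1 h2 h3
    rw [← tendsto_add_atTop_iff_nat 1]
    have h4 : Tendsto (fun n => d (n+1) x) atTop (𝓝 1) := by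
      rw [← h3]
      exact tendsto_atTop_iSup (monotone_nat_of_le_succ h2)
    have h5 := (ENNReal.tendsto_toReal ENNReal.one_ne_top).comp h4
    simp only [min_eq_left (h1 _)]
    simpa [Function.comp_def] using h5

lemma aux_pi_density {k : ℕ} (μ : Measure E) [SigmaFinite μ] (P : Measure E)
    [IsProbabilityMeasure P] (c : ℝ) (r : E → ℝ) (hrm : Measurable r)
    (hr : ∀ x, 0 ≤ r x ∧ r x ≤ 1)
    (h : ENNReal.ofReal c • P = μ.withDensity (fun x => ENNReal.ofReal (r x))) :
    ENNReal.ofReal c ^ k • Measure.pi (fun _ : Fin k => P)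
      = (Measure.pi fun _ : Fin k => μ).withDensity
          (fun u => ENNReal.ofReal (∏ i, r (u i))) := by
  have hfin : IsFiniteMeasure (ENNReal.ofReal c • P) :=
    Measure.smul_finite _ ENNReal.ofReal_ne_top
  have e1 : Measure.pi (fun _ : Fin k => ENNReal.ofReal c • P)
      = ENNReal.ofReal c ^ k • Measure.pi (fun _ : Fin k => P) := by
    refine Measure.pi_eq ?_
    intro s hs
    simp [Finset.prod_mul_distrib]
  have hri : Integrable r μ := by
    refine ⟨hrm.aestronglyMeasurable, ?_⟩
    rw [hasFiniteIntegral_iff_ofReal (ae_of_all _ fun x => (hr x).1)]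
    have : ∫⁻ x, ENNReal.ofReal (r x) ∂μ = (ENNReal.ofReal c • P) Set.univ := by
      rw [h, withDensity_apply _ MeasurableSet.univ]; simp
    rw [this]; exact measure_lt_top _ _
  rw [← e1]
  refine Measure.pi_eq ?_
  intro s hs
  have hbox : MeasurableSet (Set.univ.pi s) := MeasurableSet.univ_pi hs
  rw [withDensity_apply _ hbox, ← lintegral_indicator hbox]
  have e2 : ∀ u : Fin k → E, (Set.univ.pi s).indicator
      (fun u : Fin k → E => ENNReal.ofReal (∏ i, r (u i))) u
      = ENNReal.ofReal (∏ i, (s i).indicator r (u i)) := by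
    intro u
    by_cases hu : u ∈ Set.univ.pi s
    · rw [Set.indicator_of_mem hu]
      congr 1
      refine Finset.prod_congr rfl fun i _ => ?_
      rw [Set.indicator_of_mem (hu i (Set.mem_univ i))]
    · rw [Set.indicator_of_notMem hu]
      simp only [Set.mem_pi, Set.mem_univ, true_implies, not_forall] at hu
      obtain ⟨i, hi⟩ := hu
      rw [Finset.prod_eq_zero (Finset.mem_univ i) (Set.indicator_of_notMem hi _)]
      simp
  simp_rw [e2]
  have hii : ∀ i, Integrable ((s i).indicator r) μ := fun i => hri.indicator (hs i)
  have hnn : ∀ i x, 0 ≤ (s i).indicator r x := fun i x =>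
    Set.indicator_nonneg (fun x _ => (hr x).1) x
  rw [← ofReal_integral_eq_lintegral_ofReal
    (Integrable.fintype_prod (f := fun i => (s i).indicator r) hii)
    (ae_of_all _ fun u => Finset.prod_nonneg fun i _ => hnn i _),
    integral_fintype_prod_eq_prod, ENNReal.ofReal_prod_of_nonneg
      (fun i _ => integral_nonneg (hnn i))]
  refine Finset.prod_congr rfl fun i _ => ?_
  rw [h, withDensity_apply _ (hs i), ofReal_integral_eq_lintegral_ofReal (hii i)
    (ae_of_all _ (hnn i)), ← lintegral_indicator (hs i)]
  refine lintegral_congr fun x => ?_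
  by_cases hx : x ∈ s i <;> simp [hx]

lemma aux_pi_le {k : ℕ} (μ : Measure E) [SigmaFinite μ] (P : Measure E)
    [IsProbabilityMeasure P] (c : ℝ) (r : E → ℝ) (hrm : Measurable r)
    (hr : ∀ x, 0 ≤ r x ∧ r x ≤ 1)
    (h : ENNReal.ofReal c • P = μ.withDensity (fun x => ENNReal.ofReal (r x))) :
    ENNReal.ofReal c ^ k • Measure.pi (fun _ : Fin k => P) ≤ Measure.pi fun _ : Fin k => μ := by
  rw [aux_pi_density μ P c r hrm hr h]
  calc _ ≤ (Measure.pi fun _ : Fin k => μ).withDensity 1 := by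
        refine withDensity_mono (ae_of_all _ fun u => ?_)
        simp only [Pi.one_apply, ENNReal.ofReal_le_one]
        exact Finset.prod_le_one (fun i _ => (hr _).1) fun i _ => (hr _).2
    _ = _ := withDensity_one

lemma aux_pi_le' {k : ℕ} (μ : Measure E) [SigmaFinite μ] (P : Measure E)
    [IsProbabilityMeasure P] (c : ℝ) (hc : 0 < c) (r : E → ℝ) (hrm : Measurable r)
    (hr : ∀ x, 0 ≤ r x ∧ r x ≤ 1)
    (h : ENNReal.ofReal c • P = μ.withDensity (fun x => ENNReal.ofReal (r x))) :
    Measure.pi (fun _ : Fin k => P) ≤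
      ENNReal.ofReal (c⁻¹ ^ k) • Measure.pi fun _ : Fin k => μ := by
  have h1 := aux_pi_le (k := k) μ P c r hrm hr h
  rw [Measure.le_iff] at h1 ⊢
  intro s hs
  have h2 := h1 s hs
  simp only [Measure.smul_apply, smul_eq_mul] at h2 ⊢
  calc _ = ENNReal.ofReal (c⁻¹ ^ k) *
        (ENNReal.ofReal c ^ k * (Measure.pi (fun _ : Fin k => P)) s) := by
        rw [← mul_assoc, ← ENNReal.ofReal_pow hc.le, ← ENNReal.ofReal_mul (by positivity),
          ← mul_pow, inv_mul_cancel₀ hc.ne']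
        simp
    _ ≤ _ := by gcongr

lemma aux_integral_lim {k : ℕ} (μ : Measure E) [SigmaFinite μ] (a : ℕ → ℝ) (P : ℕ → Measure E)
    [∀ n, IsProbabilityMeasure (P n)] (ha : ∀ n, 1 ≤ n → 0 < a n)
    (r : ℕ → E → ℝ) (hrm : ∀ n, Measurable (r n)) (hr : ∀ n x, 0 ≤ r n x ∧ r n x ≤ 1)
    (h : ∀ n : ℕ, 1 ≤ n → ENNReal.ofReal ((n : ℝ) / a n) • P n
        = μ.withDensity (fun x => ENNReal.ofReal (r n x)))
    (hr1 : ∀ᵐ x ∂μ, Tendsto (fun n => r n x) atTop (𝓝 1))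
    (φ : (Fin k → E) → ℝ) (hφ : Integrable φ (Measure.pi fun _ : Fin k => μ)) :
    Tendsto (fun n : ℕ => ((n : ℝ) / a n) ^ k * ∫ u, φ u ∂(Measure.pi fun _ : Fin k => P n))
      atTop (𝓝 (∫ u, φ u ∂(Measure.pi fun _ : Fin k => μ))) := by
  have hmeas : ∀ n, Measurable (fun u : Fin k → E => ∏ i, r n (u i)) := fun n =>
    Finset.measurable_prod _ fun i _ => (hrm n).comp (measurable_pi_apply i)
  have hnn : ∀ n (u : Fin k → E), 0 ≤ ∏ i, r n (u i) := fun n u =>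
    Finset.prod_nonneg fun i _ => (hr n _).1
  have hl1 : ∀ n (u : Fin k → E), ∏ i, r n (u i) ≤ 1 := fun n u =>
    Finset.prod_le_one (fun i _ => (hr n _).1) fun i _ => (hr n _).2
  have e1 : ∀ n : ℕ, 1 ≤ n → ((n : ℝ) / a n) ^ k * ∫ u, φ u ∂(Measure.pi fun _ : Fin k => P n)
      = ∫ u, (∏ i, r n (u i)) * φ u ∂(Measure.pi fun _ : Fin k => μ) := by
    intro n hn
    have := aux_pi_density (k := k) μ (P n) _ (r n) (hrm n) (hr n) (h n hn)
    have hc : 0 ≤ (n : ℝ) / a n := div_nonneg (by positivity) (ha n hn).le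
    have h2 : ∫ u, φ u ∂(ENNReal.ofReal ((n : ℝ) / a n) ^ k •
        Measure.pi (fun _ : Fin k => P n)) = ∫ u, φ u ∂((Measure.pi fun _ : Fin k => μ).withDensity
          (fun u => ENNReal.ofReal (∏ i, r n (u i)))) := by rw [this]
    rw [integral_smul_measure, ← ENNReal.ofReal_pow hc,
      ENNReal.toReal_ofReal (pow_nonneg hc k), smul_eq_mul] at h2
    rw [h2, integral_withDensity_eq_integral_toReal_smul (by fun_prop)
      (ae_of_all _ fun u => ENNReal.ofReal_lt_top)]
    simp [ENNReal.toReal_ofReal (hnn n _)]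
  have e2 : Tendsto (fun n : ℕ => ∫ u, (∏ i, r n (u i)) * φ u ∂(Measure.pi fun _ : Fin k => μ))
      atTop (𝓝 (∫ u, φ u ∂(Measure.pi fun _ : Fin k => μ))) := by
    refine tendsto_integral_of_dominated_convergence (fun u => ‖φ u‖) ?_ hφ.norm ?_ ?_
    · intro n
      exact (hmeas n).aestronglyMeasurable.mul hφ.1
    · intro n
      refine ae_of_all _ fun u => ?_
      rw [norm_mul, Real.norm_of_nonneg (hnn n u)]
      exact mul_le_of_le_one_left (norm_nonneg _) (hl1 n u)
    · have : ∀ᵐ u ∂(Measure.pi fun _ : Fin k => μ), ∀ i,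
          Tendsto (fun n => r n (u i)) atTop (𝓝 1) := by
        rw [ae_all_iff]
        intro i
        exact (Measure.quasiMeasurePreserving_eval (μ := fun _ : Fin k => μ) i).ae hr1
      filter_upwards [this] with u hu
      have h3 : Tendsto (fun n => ∏ i, r n (u i)) atTop (𝓝 (∏ i : Fin k, (1:ℝ))) :=
        tendsto_finsetProd _ fun i _ => hu i
      simpa using h3.mul_const (φ u)
  refine e2.congr' ?_
  filter_upwards [eventually_ge_atTop 1] with n hn
  rw [e1 n hn]

end Part1

section Part2

variable {E : Type*} [MeasurableSpace E]

lemma aux_cs {X : Type*} [MeasurableSpace X] {ν : Measure X} {f g : X → ℝ}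
    (hf : MemLp f 2 ν) (hg : MemLp g 2 ν) :
    |∫ x, f x * g x ∂ν| ≤ Real.sqrt (∫ x, f x ^ 2 ∂ν) * Real.sqrt (∫ x, g x ^ 2 ∂ν) := by
  have h := integral_mul_le_Lp_mul_Lq_of_nonneg (μ := ν) (f := fun x => |f x|)
    (g := fun x => |g x|) Real.HolderConjugate.two_two
    (ae_of_all _ fun x => abs_nonneg _) (ae_of_all _ fun x => abs_nonneg _)
    (by rw [ENNReal.ofReal_ofNat]; exact hf.abs) (by rw [ENNReal.ofReal_ofNat]; exact hg.abs)
  have h0 : |∫ x, f x * g x ∂ν| ≤ ∫ x, |f x| * |g x| ∂ν := by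
    refine (abs_integral_le_integral_abs).trans (le_of_eq ?_)
    simp [abs_mul]
  refine h0.trans (h.trans (le_of_eq ?_))
  simp [Real.sqrt_eq_rpow]

lemma aux_mp {ι I : Type*} [Fintype ι] [Fintype I] (P : Measure E) [IsProbabilityMeasure P]
    (α : ι → I) (hα : Function.Injective α) :
    MeasurePreserving (fun w : I → E => w ∘ α) (Measure.pi fun _ : I => P)
      (Measure.pi fun _ : ι => P) := by
  have hm : Measurable (fun w : I → E => w ∘ α) :=
    measurable_pi_lambda _ fun i => measurable_pi_apply _
  refine ⟨hm, ?_⟩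
  have h1 : iIndepFun (fun (i : I) (w : I → E) => w i) (Measure.pi fun _ : I => P) :=
    iIndepFun_pi (X := fun (_ : I) (x : E) => x) (fun i => aemeasurable_id)
  have h2 := h1.precomp hα
  rw [iIndepFun_iff_map_fun_eq_pi_map (fun i => (measurable_pi_apply _).aemeasurable)] at h2
  have h3 : ∀ i : ι, Measure.map (fun w : I → E => w (α i)) (Measure.pi fun _ : I => P) = P :=
    fun i => (measurePreserving_eval (fun _ : I => P) (α i)).map_eq
  simp only [h3] at h2
  exact h2

lemma aux_memLp {k : ℕ} {I : Type*} [Fintype I] (P : Measure E) [IsProbabilityMeasure P]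
    (F : (Fin k → E) → ℝ) (hF0 : ∀ u, ¬ Function.Injective u → F u = 0)
    (hF : MemLp F 2 (Measure.pi fun _ : Fin k => P)) (α : Fin k → I) :
    MemLp (fun w : I → E => F (w ∘ α)) 2 (Measure.pi fun _ : I => P) := by
  by_cases hα : Function.Injective α
  · exact hF.comp_measurePreserving (aux_mp P α hα)
  · have : (fun w : I → E => F (w ∘ α)) = fun _ => 0 := by
      funext w
      exact hF0 _ fun h => hα h.of_comp
    rw [this]; exact MemLp.zero

lemma aux_sq_le {k : ℕ} {I : Type*} [Fintype I] (P : Measure E) [IsProbabilityMeasure P]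
    (F : (Fin k → E) → ℝ) (hFm : Measurable F) (hF0 : ∀ u, ¬ Function.Injective u → F u = 0)
    (α : Fin k → I) :
    ∫ w, F (w ∘ α) ^ 2 ∂(Measure.pi fun _ : I => P)
      ≤ ∫ u, F u ^ 2 ∂(Measure.pi fun _ : Fin k => P) := by
  by_cases hα : Function.Injective α
  · have h := aux_mp P α hα
    rw [← h.map_eq, integral_map h.aemeasurable (hFm.pow_const 2).aestronglyMeasurable]
  · have : ∀ w : I → E, F (w ∘ α) = 0 := fun w => hF0 _ fun h => hα h.of_comp
    simp only [this]
    simp only [ne_eq, OfNat.ofNat_ne_zero, not_false_eq_true, zero_pow, integral_zero]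
    positivity

lemma aux_indep {k : ℕ} {I : Type*} [Fintype I] (P : Measure E) [IsProbabilityMeasure P]
    (α : Fin k → I) (i : I) (hi : i ∉ Set.range α) :
    IndepFun (fun w : I → E => w ∘ α) (fun w : I → E => w i) (Measure.pi fun _ : I => P) := by
  classical
  have h1 : iIndepFun (fun (i : I) (w : I → E) => w i) (Measure.pi fun _ : I => P) :=
    iIndepFun_pi (X := fun (_ : I) (x : E) => x) (fun i => aemeasurable_id)
  have hd : Disjoint (Finset.univ.image α) ({i} : Finset I) := by
    rw [Finset.disjoint_singleton_right]
    simpa using hi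
  have h2 := h1.indepFun_finset _ _ hd (fun i => measurable_pi_apply i)
  have h3 := h2.comp (φ := fun (z : (Finset.univ.image α) → E) (j : Fin k) =>
      z ⟨α j, Finset.mem_image_of_mem _ (Finset.mem_univ j)⟩)
    (ψ := fun (z : ({i} : Finset I) → E) => z ⟨i, Finset.mem_singleton_self i⟩)
    (measurable_pi_lambda _ fun i => measurable_pi_apply _)
    (measurable_pi_apply (X := fun _ : ({i} : Finset I) => E) _)
  exact h3

lemma aux_small {k : ℕ} {I : Type*} [Fintype I] (P : Measure E) [IsProbabilityMeasure P]
    (F G : (Fin k → E) → ℝ) (hFm : Measurable F) (hGm : Measurable G)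
    (hF0 : ∀ u, ¬ Function.Injective u → F u = 0)
    (hG0 : ∀ u, ¬ Function.Injective u → G u = 0)
    (hF : MemLp F 2 (Measure.pi fun _ : Fin k => P))
    (hG : MemLp G 2 (Measure.pi fun _ : Fin k => P))
    (A : Set E) (hA : MeasurableSet A)
    (α β : Fin k → I) (i₀ : Fin k) (hi : β i₀ ∉ Set.range α) :
    |∫ w, F (w ∘ α) * G (w ∘ β) ∂(Measure.pi fun _ : I => P)|
      ≤ Real.sqrt (∫ u, F u ^ 2 ∂(Measure.pi fun _ : Fin k => P)) *
        (Real.sqrt (P.real A) * Real.sqrt (∫ u, G u ^ 2 ∂(Measure.pi fun _ : Fin k => P))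
         + Real.sqrt (∫ u, ((Set.univ.pi fun _ => A)ᶜ.indicator G u) ^ 2
            ∂(Measure.pi fun _ : Fin k => P))) := by
  classical
  set S : Set (Fin k → E) := Set.univ.pi fun _ => A with hS
  have hSm : MeasurableSet S := MeasurableSet.univ_pi fun _ => hA
  set G1 := S.indicator G with hG1
  set G2 := Sᶜ.indicator G with hG2
  have hG1m : Measurable G1 := hGm.indicator hSm
  have hG2m : Measurable G2 := hGm.indicator hSm.compl
  have hG10 : ∀ u, ¬ Function.Injective u → G1 u = 0 := by
    intro u hu; rw [hG1, Set.indicator_apply]; simp [hG0 u hu]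
  have hG20 : ∀ u, ¬ Function.Injective u → G2 u = 0 := by
    intro u hu; rw [hG2, Set.indicator_apply]; simp [hG0 u hu]
  have hG1L : MemLp G1 2 (Measure.pi fun _ : Fin k => P) := hG.indicator hSm
  have hG2L : MemLp G2 2 (Measure.pi fun _ : Fin k => P) := hG.indicator hSm.compl
  have mF := aux_memLp (I := I) P F hF0 hF α
  have mG1 := aux_memLp (I := I) P G1 hG10 hG1L β
  have mG2 := aux_memLp (I := I) P G2 hG20 hG2L β
  set p := β i₀ with hp
  set B : Set (I → E) := {w | w p ∈ A} with hB
  have hBm : MeasurableSet B := measurable_pi_apply p hA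
  have mFB : MemLp (B.indicator fun w : I → E => F (w ∘ α)) 2 (Measure.pi fun _ : I => P) :=
    mF.indicator hBm
  have e0 : ∀ w : I → E, F (w ∘ α) * G (w ∘ β)
      = B.indicator (fun w : I → E => F (w ∘ α)) w * G1 (w ∘ β) + F (w ∘ α) * G2 (w ∘ β) := by
    intro w
    by_cases h1 : w ∘ β ∈ S
    · have h2 : w ∈ B := h1 i₀ (Set.mem_univ _)
      simp [hG1, hG2, h1, h2]
    · simp [hG1, hG2, h1]
  have i1 : Integrable (fun w : I → E =>
      B.indicator (fun w : I → E => F (w ∘ α)) w * G1 (w ∘ β)) (Measure.pi fun _ : I => P) :=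
    mFB.integrable_mul mG1
  have i2 : Integrable (fun w : I → E => F (w ∘ α) * G2 (w ∘ β)) (Measure.pi fun _ : I => P) :=
    mF.integrable_mul mG2
  simp_rw [e0]
  rw [integral_add i1 i2]
  have b1 := aux_cs mFB mG1
  have b2 := aux_cs mF mG2
  have q1 := aux_sq_le (I := I) P F hFm hF0 α
  have q2 := aux_sq_le (I := I) P G1 hG1m hG10 β
  have q3 := aux_sq_le (I := I) P G2 hG2m hG20 β
  have q4 : ∫ u, G1 u ^ 2 ∂(Measure.pi fun _ : Fin k => P)
      ≤ ∫ u, G u ^ 2 ∂(Measure.pi fun _ : Fin k => P) := by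
    refine integral_mono hG1L.integrable_sq hG.integrable_sq fun u => ?_
    simp only [hG1, Set.indicator_apply]
    split_ifs
    · exact le_rfl
    · simp; positivity
  have q5 : ∫ w, (B.indicator (fun w : I → E => F (w ∘ α)) w) ^ 2 ∂(Measure.pi fun _ : I => P)
      = (∫ w, F (w ∘ α) ^ 2 ∂(Measure.pi fun _ : I => P)) * P.real A := by
    have hAm : Measurable (A.indicator fun _ => (1 : ℝ)) := measurable_const.indicator hA
    have hind := (aux_indep P α p hi).comp (φ := fun u => F u ^ 2)
      (ψ := A.indicator fun _ => (1 : ℝ)) (hFm.pow_const 2) hAm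
    have hmα : Measurable (fun w : I → E => w ∘ α) :=
      measurable_pi_lambda _ fun i => measurable_pi_apply _
    have := hind.integral_fun_mul_eq_mul_integral
      ((hFm.pow_const 2).comp hmα).aestronglyMeasurable
      (hAm.comp (measurable_pi_apply p)).aestronglyMeasurable
    simp only [Function.comp_apply] at this
    have e3 : ∫ w : I → E, A.indicator (fun _ => (1 : ℝ)) (w p) ∂(Measure.pi fun _ : I => P)
        = P.real A := by
      have hev := measurePreserving_eval (fun _ : I => P) p
      have := integral_map (f := A.indicator (fun _ => (1 : ℝ))) hev.aemeasurable
        (measurable_const.indicator hA).aestronglyMeasurable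
      rw [hev.map_eq, integral_indicator hA] at this
      rw [show (∫ w : I → E, A.indicator (fun _ => (1 : ℝ)) (w p) ∂(Measure.pi fun _ : I => P))
        = _ from this.symm]
      simp
    rw [← e3, ← this]
    refine integral_congr_ae (ae_of_all _ fun w => ?_)
    by_cases h : w p ∈ A
    · have : w ∈ B := h
      simp [h, this]
    · have : w ∉ B := h
      simp [h, this]
  refine (abs_add_le _ _).trans ?_
  rw [mul_add]
  refine add_le_add (b1.trans ?_) (b2.trans ?_)
  · rw [q5, Real.sqrt_mul (by positivity), mul_assoc]
    gcongr
    exact q2.trans q4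
  · gcongr

lemma aux_sq_scale {k : ℕ} (μ : Measure E) [SigmaFinite μ] (P : Measure E)
    [IsProbabilityMeasure P] (C : ℝ) (hC : 0 ≤ C)
    (h : Measure.pi (fun _ : Fin k => P) ≤ ENNReal.ofReal C • Measure.pi fun _ : Fin k => μ)
    (F : (Fin k → E) → ℝ) (hF : MemLp F 2 (Measure.pi fun _ : Fin k => μ)) :
    ∫ u, F u ^ 2 ∂(Measure.pi fun _ : Fin k => P)
      ≤ C * ∫ u, F u ^ 2 ∂(Measure.pi fun _ : Fin k => μ) := by
  have h1 := integral_mono_measure (f := fun u => F u ^ 2) h (ae_of_all _ fun u => by positivity)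
    (hF.integrable_sq.smul_measure ENNReal.ofReal_ne_top)
  rwa [integral_smul_measure, ENNReal.toReal_ofReal hC, smul_eq_mul] at h1

lemma aux_trunc {k : ℕ} (μ : Measure E) [SigmaFinite μ]
    (G : (Fin k → E) → ℝ) (hG : MemLp G 2 (Measure.pi fun _ : Fin k => μ)) (δ : ℝ) (hδ : 0 < δ) :
    ∃ A : Set E, MeasurableSet A ∧ μ A < ∞ ∧
      Real.sqrt (∫ u, ((Set.univ.pi fun _ => A)ᶜ.indicator G u) ^ 2
        ∂(Measure.pi fun _ : Fin k => μ)) < δ := by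
  classical
  have hlim : Tendsto (fun m : ℕ => ∫ u, ((Set.univ.pi fun _ => spanningSets μ m)ᶜ.indicator G u) ^ 2
        ∂(Measure.pi fun _ : Fin k => μ)) atTop
        (𝓝 (∫ u, (0:ℝ) ∂(Measure.pi fun _ : Fin k => μ))) := by
    have hm : ∀ m, MeasurableSet (Set.univ.pi fun _ : Fin k => spanningSets μ m) := fun m =>
      MeasurableSet.univ_pi fun _ => measurableSet_spanningSets μ m
    refine tendsto_integral_of_dominated_convergence (fun u => G u ^ 2) ?_ hG.integrable_sq ?_ ?_
    · intro m
      exact ((hG.indicator (hm m).compl).1.pow 2)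
    · intro m
      refine ae_of_all _ fun u => ?_
      rw [Real.norm_of_nonneg (by positivity), Set.indicator_apply]
      split_ifs
      · exact le_rfl
      · simp; positivity
    · refine ae_of_all _ fun u => ?_
      refine tendsto_const_nhds.congr' ?_
      have : ∀ᶠ m in atTop, ∀ i, u i ∈ spanningSets μ m := by
        rw [eventually_all]
        intro i
        filter_upwards [eventually_ge_atTop (spanningSetsIndex μ (u i))] with m hm
        exact mem_spanningSets_of_index_le μ _ hm
      filter_upwards [this] with m hm
      have : u ∈ (Set.univ.pi fun _ : Fin k => spanningSets μ m) := fun i _ => hm i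
      simp [this]
  have h2 := (Real.continuous_sqrt.tendsto _).comp hlim
  simp only [integral_zero, Real.sqrt_zero] at h2
  obtain ⟨m, hm⟩ := (h2.eventually_lt_const hδ).exists
  exact ⟨spanningSets μ m, measurableSet_spanningSets μ m, measure_spanningSets_lt_top μ m, hm⟩

lemma aux_small_lim {k : ℕ} (μ : Measure E) [SigmaFinite μ] (a : ℕ → ℝ) (P : ℕ → Measure E)
    [∀ n, IsProbabilityMeasure (P n)] (h21 : Assumption21 μ a P)
    (hle : ∀ n : ℕ, 1 ≤ n → Measure.pi (fun _ : Fin k => P n) ≤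
      ENNReal.ofReal ((a n / n) ^ k) • Measure.pi fun _ : Fin k => μ)
    (hle1 : ∀ n : ℕ, 1 ≤ n → ENNReal.ofReal ((n : ℝ) / a n) • P n ≤ μ)
    (F G : (Fin k → E) → ℝ) (hFm : Measurable F) (hGm : Measurable G)
    (hF0 : ∀ u, ¬ Function.Injective u → F u = 0)
    (hG0 : ∀ u, ¬ Function.Injective u → G u = 0)
    (hF : MemLp F 2 (Measure.pi fun _ : Fin k => μ))
    (hG : MemLp G 2 (Measure.pi fun _ : Fin k => μ)) (δ : ℝ) (hδ : 0 < δ) :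
    ∀ᶠ n : ℕ in atTop, ∀ (I : Type) [Fintype I] (α β : Fin k → I) (i₀ : Fin k),
      β i₀ ∉ Set.range α →
      |∫ w, F (w ∘ α) * G (w ∘ β) ∂(Measure.pi fun _ : I => P n)| ≤ (a n / n) ^ k * δ := by
  obtain ⟨-, ha, -, han, -, -⟩ := h21
  set nF := Real.sqrt (∫ u, F u ^ 2 ∂(Measure.pi fun _ : Fin k => μ)) with hnF
  set nG := Real.sqrt (∫ u, G u ^ 2 ∂(Measure.pi fun _ : Fin k => μ)) with hnG
  have hnF0 : 0 ≤ nF := Real.sqrt_nonneg _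
  have hnG0 : 0 ≤ nG := Real.sqrt_nonneg _
  obtain ⟨A, hA, hAfin, hAδ⟩ := aux_trunc μ G hG (δ / (2 * (nF + 1))) (by positivity)
  have hlim : Tendsto (fun n : ℕ => nF * (Real.sqrt (a n / n * μ.real A) * nG)) atTop (𝓝 0) := by
    have h1 : Tendsto (fun n : ℕ => Real.sqrt (a n / n * μ.real A)) atTop (𝓝 0) := by
      have := (Real.continuous_sqrt.tendsto _).comp (han.mul_const (μ.real A))
      simpa [Function.comp_def] using this
    simpa using (h1.mul_const nG).const_mul nF
  filter_upwards [eventually_ge_atTop 1, hlim.eventually_lt_const (half_pos hδ)] with n hn hsm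
  intro I _ α β i₀ hi
  have han : 0 < a n := ha n hn
  have hn0 : (0 : ℝ) < n := by exact_mod_cast hn
  have hFP : MemLp F 2 (Measure.pi fun _ : Fin k => P n) :=
    hF.of_measure_le_smul ENNReal.ofReal_ne_top (hle n hn)
  have hGP : MemLp G 2 (Measure.pi fun _ : Fin k => P n) :=
    hG.of_measure_le_smul ENNReal.ofReal_ne_top (hle n hn)
  have hs := aux_small (P n) F G hFm hGm hF0 hG0 hFP hGP A hA α β i₀ hi
  have hSm : MeasurableSet (Set.univ.pi fun _ : Fin k => A) := MeasurableSet.univ_pi fun _ => hA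
  set c := (a n / n) ^ k with hc
  have hc0 : 0 ≤ c := by positivity
  have s1 := Real.sqrt_le_sqrt (aux_sq_scale μ (P n) c hc0 (hle n hn) F hF)
  have s2 := Real.sqrt_le_sqrt (aux_sq_scale μ (P n) c hc0 (hle n hn) G hG)
  have s3 := Real.sqrt_le_sqrt (aux_sq_scale μ (P n) c hc0 (hle n hn) _ (hG.indicator hSm.compl))
  rw [Real.sqrt_mul hc0] at s1 s2 s3
  have s4 : (P n).real A ≤ a n / n * μ.real A := by
    have h1 := ENNReal.toReal_mono hAfin.ne (hle1 n hn A)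
    simp only [Measure.smul_apply, smul_eq_mul, ENNReal.toReal_mul] at h1
    rw [ENNReal.toReal_ofReal (by positivity)] at h1
    change (n : ℝ) / a n * (P n).real A ≤ μ.real A at h1
    calc (P n).real A = a n / n * ((n : ℝ) / a n * (P n).real A) := by field_simp
      _ ≤ _ := by gcongr
  have s5 := Real.sqrt_le_sqrt s4
  refine hs.trans ?_
  have hcc : Real.sqrt c * Real.sqrt c = c := Real.mul_self_sqrt hc0
  calc _ ≤ (Real.sqrt c * nF) * (Real.sqrt (a n / n * μ.real A) * (Real.sqrt c * nG)
        + Real.sqrt c * (δ / (2 * (nF + 1)))) := by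
        gcongr
        exact s3.trans (by gcongr)
    _ = c * (nF * (Real.sqrt (a n / n * μ.real A) * nG) + nF * (δ / (2 * (nF + 1)))) := by
        linear_combination (nF * (Real.sqrt (a n / n * μ.real A) * nG) + nF * (δ / (2 * (nF + 1)))) * hcc
    _ ≤ c * (δ / 2 + δ / 2) := by
        gcongr
        rw [mul_div_assoc', div_le_div_iff₀ (by positivity) (by positivity)]
        nlinarith
    _ = c * δ := by ring

end Part2

section Part3

/-- Position in the enlarged sample of each of the `2k` slots. -/
def locMap {n k : ℕ} (h : Fin k ⊕ Fin k → Fin n) (ε : Fin k ⊕ Fin k → Bool) :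
    Fin k ⊕ Fin k → Fin n ⊕ (Fin k ⊕ Fin k) :=
  fun s => if ε s = true then Sum.inl (h s) else Sum.inr s

/-- The sign attached to a choice of positive and negative parts. -/
def sgnOf {S : Type*} [Fintype S] (ε : S → Bool) : ℝ :=
  (-1 : ℝ) ^ (Finset.univ.filter fun i => ε i = false).card

lemma sgnOf_eq_prod {S : Type*} [Fintype S] (ε : S → Bool) :
    sgnOf ε = ∏ s, (if ε s = false then (-1 : ℝ) else 1) := by
  rw [sgnOf, Finset.prod_ite]
  simp

lemma abs_sgnOf {S : Type*} [Fintype S] (ε : S → Bool) : |sgnOf ε| = 1 := by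
  simp [sgnOf, abs_pow]

/-- The flip of one sign. -/
def flipAt {S : Type*} [DecidableEq S] (s : S) (ε : S → Bool) : S → Bool :=
  Function.update ε s (!ε s)

lemma flipAt_flipAt {S : Type*} [DecidableEq S] (s : S) (ε : S → Bool) :
    flipAt s (flipAt s ε) = ε := by
  funext t
  by_cases h : t = s
  · subst h; simp [flipAt]
  · simp [flipAt, h]

lemma sgnOf_flipAt {S : Type*} [Fintype S] [DecidableEq S] (s : S) (ε : S → Bool) :
    sgnOf (flipAt s ε) = - sgnOf ε := by
  rw [sgnOf_eq_prod, sgnOf_eq_prod, ← Finset.mul_prod_erase _ _ (Finset.mem_univ s),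
    ← Finset.mul_prod_erase _ _ (Finset.mem_univ s), ← neg_mul]
  congr 1
  · cases h : ε s <;> simp [flipAt, h]
  · refine Finset.prod_congr rfl fun t ht => ?_
    have : t ≠ s := Finset.ne_of_mem_erase ht
    simp [flipAt, this]

lemma locMap_flipAt {n k : ℕ} (h : Fin k ⊕ Fin k → Fin n) (ε : Fin k ⊕ Fin k → Bool)
    (s : Fin k ⊕ Fin k) (hs : ∀ t, t ≠ s → h t ≠ h s) :
    locMap h (flipAt s ε) =
      (Equiv.swap (Sum.inl (h s)) (Sum.inr s) : Equiv.Perm (Fin n ⊕ (Fin k ⊕ Fin k)))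
        ∘ locMap h ε := by
  funext t
  simp only [Function.comp_apply]
  by_cases hts : t = s
  · subst hts
    cases h1 : ε t <;> simp [locMap, flipAt, h1]
  · have e1 : locMap h (flipAt s ε) t = locMap h ε t := by simp [locMap, flipAt, hts]
    rw [e1, Equiv.swap_apply_of_ne_of_ne]
    · unfold locMap
      split_ifs
      · simpa using hs t hts
      · simp
    · unfold locMap
      split_ifs
      · simp
      · simpa using hts

lemma card_noSingle (n k : ℕ) :
    (Finset.univ.filter fun h : Fin k ⊕ Fin k → Fin n =>
      ∀ s, ∃ t, t ≠ s ∧ h t = h s).card ≤ k ^ (k + k) * n ^ k := by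
  classical
  have hsub : (Finset.univ.filter fun h : Fin k ⊕ Fin k → Fin n =>
      ∀ s, ∃ t, t ≠ s ∧ h t = h s) ⊆
      Finset.univ.image (fun p : ((Fin k ⊕ Fin k) → Fin k) × (Fin k → Fin n) => p.2 ∘ p.1) := by
    intro h hh
    simp only [Finset.mem_filter, Finset.mem_univ, true_and] at hh
    have hcard : (Finset.univ.image h).card ≤ k := by
      have h1 : 2 * (Finset.univ.image h).card ≤ (Finset.univ : Finset (Fin k ⊕ Fin k)).card := by
        refine Finset.mul_card_image_le_card _ 2 ?_
        intro b hb
        obtain ⟨s, -, rfl⟩ := Finset.mem_image.1 hb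
        obtain ⟨t, hts, hth⟩ := hh s
        have : ({t, s} : Finset (Fin k ⊕ Fin k)) ⊆ Finset.univ.filter fun x => h x = h s := by
          intro x hx
          simp only [Finset.mem_insert, Finset.mem_singleton] at hx
          rcases hx with rfl | rfl <;> simp [hth]
        have h2 := Finset.card_le_card this
        rwa [Finset.card_pair hts] at h2
      simp only [Finset.card_univ, Fintype.card_sum, Fintype.card_fin] at h1
      omega
    obtain ⟨e⟩ : Nonempty ((Finset.univ.image h : Finset (Fin n)) ↪ Fin k) := by
      rw [Function.Embedding.nonempty_iff_card_le]
      rw [Fintype.card_coe, Fintype.card_fin]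
      exact hcard
    rw [Finset.mem_image]
    rcases isEmpty_or_nonempty (Fin k ⊕ Fin k) with he | ⟨⟨s0⟩⟩
    · have : k = 0 := by
        by_contra hk
        exact he.elim (Sum.inl ⟨0, Nat.pos_of_ne_zero hk⟩)
      subst this
      exact ⟨(fun s => he.elim s, fun i => i.elim0), Finset.mem_univ _, by
        funext s; exact he.elim s⟩
    · let q : Fin k ⊕ Fin k → Fin k := fun s =>
        e ⟨h s, Finset.mem_image_of_mem h (Finset.mem_univ s)⟩
      have hfac : Function.FactorsThrough h q := by
        intro x y hxy
        have := e.injective hxy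
        simpa using this
      exact ⟨(q, Function.extend q h fun _ => h s0), Finset.mem_univ _, by
        funext s
        exact hfac.extend_apply (fun _ => h s0) s⟩
  refine (Finset.card_le_card hsub).trans (Finset.card_image_le.trans ?_)
  simp [Fintype.card_prod]

lemma card_good (n k : ℕ) (π : Equiv.Perm (Fin k)) :
    (Finset.univ.filter fun h : Fin k ⊕ Fin k → Fin n =>
      Function.Injective (h ∘ Sum.inl) ∧ h ∘ Sum.inr = h ∘ Sum.inl ∘ π).card
      = n.descFactorial k := by
  classical
  have := Fintype.card_embedding_eq (α := Fin k) (β := Fin n)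
  simp only [Fintype.card_fin] at this
  rw [← this, ← Finset.card_univ]
  symm
  refine Finset.card_bij (fun j _ => Sum.elim (j : Fin k → Fin n) (j ∘ π)) ?_ ?_ ?_
  · intro j _
    simp only [Finset.mem_filter, Finset.mem_univ, true_and, Sum.elim_comp_inl, Sum.elim_comp_inr]
    exact ⟨j.injective, by rw [← Function.comp_assoc, Sum.elim_comp_inl]⟩
  · intro j _ j' _ hjj
    have : (Sum.elim (j : Fin k → Fin n) (j ∘ π)) ∘ Sum.inl
      = (Sum.elim (j' : Fin k → Fin n) (j' ∘ π)) ∘ Sum.inl := by rw [hjj]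
    simp only [Sum.elim_comp_inl] at this
    exact DFunLike.coe_injective this
  · intro h hh
    simp only [Finset.mem_filter, Finset.mem_univ, true_and] at hh
    refine ⟨⟨h ∘ Sum.inl, hh.1⟩, Finset.mem_univ _, ?_⟩
    funext s
    rcases s with i | i
    · rfl
    · exact (congrFun hh.2 i).symm

lemma comb_main (n k : ℕ) (q : (Fin k ⊕ Fin k → Fin n ⊕ (Fin k ⊕ Fin k)) → ℝ)
    (M : Equiv.Perm (Fin k) → ℝ) (η : ℝ) (hη : 0 ≤ η)
    (q1 : ∀ (τ : Equiv.Perm (Fin n ⊕ (Fin k ⊕ Fin k))) L, q (τ ∘ L) = q L)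
    (q2 : ∀ L, ¬ Function.Injective (L ∘ Sum.inl) → q L = 0)
    (q2' : ∀ L, ¬ Function.Injective (L ∘ Sum.inr) → q L = 0)
    (q3 : ∀ L (π : Equiv.Perm (Fin k)), Function.Injective (L ∘ Sum.inl) → L ∘ Sum.inr = L ∘ Sum.inl ∘ π → q L = M π)
    (q4 : ∀ L i, L (Sum.inr i) ∉ Set.range (L ∘ Sum.inl) → |q L| ≤ η)
    (q4' : ∀ L i, L (Sum.inl i) ∉ Set.range (L ∘ Sum.inr) → |q L| ≤ η) :
    |∑ h : Fin k ⊕ Fin k → Fin n, ∑ ε : Fin k ⊕ Fin k → Bool, sgnOf ε * q (locMap h ε)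
      - n.descFactorial k * ∑ π, M π| ≤ (k ^ (k + k) * n ^ k : ℕ) * (2 ^ (k + k) * η) := by
  classical
  have emain : (n.descFactorial k : ℝ) * ∑ π, M π
      = ∑ h : Fin k ⊕ Fin k → Fin n, ∑ π : Equiv.Perm (Fin k),
        if Function.Injective (h ∘ Sum.inl) ∧ h ∘ Sum.inr = h ∘ Sum.inl ∘ π then M π else 0 := by
    rw [Finset.sum_comm, Finset.mul_sum]
    refine Finset.sum_congr rfl fun π _ => ?_
    rw [← Finset.sum_filter, Finset.sum_const, nsmul_eq_mul]
    congr 2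
    rw [← card_good n k π]
  rw [emain, ← Finset.sum_sub_distrib]
  set D : (Fin k ⊕ Fin k → Fin n) → ℝ := fun h =>
    (∑ ε : Fin k ⊕ Fin k → Bool, sgnOf ε * q (locMap h ε)) - ∑ π : Equiv.Perm (Fin k),
        if Function.Injective (h ∘ Sum.inl) ∧ h ∘ Sum.inr = h ∘ Sum.inl ∘ π then M π else 0 with hD
  -- cancellation
  have hD0 : ∀ h, (¬ ∀ s, ∃ t, t ≠ s ∧ h t = h s) → D h = 0 := by
    intro h hh
    push Not at hh
    obtain ⟨s, hs⟩ := hh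
    have z1 : ∑ ε : Fin k ⊕ Fin k → Bool, sgnOf ε * q (locMap h ε) = 0 := by
      have hinv : Function.Involutive (flipAt s) := fun ε => flipAt_flipAt s ε
      have e1 := Equiv.sum_comp (hinv.toPerm (flipAt s)) (fun ε => sgnOf ε * q (locMap h ε))
      have e2 : ∀ ε : Fin k ⊕ Fin k → Bool, sgnOf (hinv.toPerm (flipAt s) ε) * q (locMap h (hinv.toPerm (flipAt s) ε))
          = - (sgnOf ε * q (locMap h ε)) := by
        intro ε
        change sgnOf (flipAt s ε) * q (locMap h (flipAt s ε)) = _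
        rw [sgnOf_flipAt, locMap_flipAt h ε s hs, q1]
        ring
      simp only [e2, Finset.sum_neg_distrib] at e1
      linarith
    have z2 : ∀ π : Equiv.Perm (Fin k),
        ¬ (Function.Injective (h ∘ Sum.inl) ∧ h ∘ Sum.inr = h ∘ Sum.inl ∘ π) := by
      rintro π ⟨-, hπ⟩
      rcases s with i | i
      · refine hs (Sum.inr (π.symm i)) (by simp) ?_
        have := congrFun hπ (π.symm i)
        simpa using this
      · refine hs (Sum.inl (π i)) (by simp) ?_
        have := congrFun hπ i
        simpa using this.symm
    simp only [hD, z1, z2, if_false]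
    simp
  -- bound
  have hDb : ∀ h, |D h| ≤ 2 ^ (k + k) * η := by
    intro h
    set εt : Fin k ⊕ Fin k → Bool := fun _ => true with hεt
    have b1 : ∀ ε, ε ≠ εt → |sgnOf ε * q (locMap h ε)| ≤ η := by
      intro ε hε
      rw [abs_mul, abs_sgnOf, one_mul]
      obtain ⟨s, hs⟩ := Function.ne_iff.1 hε
      have hs' : ε s = false := by simpa [hεt] using hs
      have hloc : locMap h ε s = Sum.inr s := by simp [locMap, hs']
      have hne : ∀ t, t ≠ s → locMap h ε t ≠ Sum.inr s := by
        intro t ht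
        unfold locMap
        split_ifs
        · simp
        · simpa using ht
      rcases s with i | i
      · refine q4' _ i ?_
        rintro ⟨j, hj⟩
        rw [hloc] at hj
        exact hne (Sum.inr j) (by simp) hj
      · refine q4 _ i ?_
        rintro ⟨j, hj⟩
        rw [hloc] at hj
        exact hne (Sum.inl j) (by simp) hj
    have hlt : locMap h εt = Sum.inl ∘ h := by funext s; simp [locMap, hεt]
    have b2 : |sgnOf εt * q (locMap h εt) - ∑ π : Equiv.Perm (Fin k),
        if Function.Injective (h ∘ Sum.inl) ∧ h ∘ Sum.inr = h ∘ Sum.inl ∘ π then M π else 0|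
        ≤ η := by
      have hsg : sgnOf εt = 1 := by simp [sgnOf, hεt]
      rw [hsg, one_mul, hlt]
      by_cases i1 : Function.Injective (h ∘ Sum.inl)
      swap
      · rw [q2 _ (fun hc => i1 (by
          intro x y hxy
          exact hc (congrArg (Sum.inl : Fin n → Fin n ⊕ (Fin k ⊕ Fin k)) hxy)))]
        simpa [i1] using hη
      by_cases ex : ∃ π : Equiv.Perm (Fin k), h ∘ Sum.inr = h ∘ Sum.inl ∘ π
      · obtain ⟨π, hπ⟩ := ex
        have huniq : ∀ π' : Equiv.Perm (Fin k),
            h ∘ Sum.inr = h ∘ Sum.inl ∘ π' ↔ π' = π := by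
          intro π'
          constructor
          · intro h'
            ext1 x
            exact i1 (by have := congrFun (h'.symm.trans hπ) x; simpa using this)
          · rintro rfl; exact hπ
        have hi : Function.Injective
            ((Sum.inl ∘ h : Fin k ⊕ Fin k → Fin n ⊕ (Fin k ⊕ Fin k)) ∘ Sum.inl) := by
          rw [Function.comp_assoc]; exact Sum.inl_injective.comp i1
        rw [q3 _ π hi (by rw [Function.comp_assoc, hπ]; rfl)]
        simp only [i1, true_and, huniq, Finset.sum_ite_eq', Finset.mem_univ, if_true, sub_self,
          abs_zero]
        exact hη
      · have : ∀ π : Equiv.Perm (Fin k), ¬ (h ∘ Sum.inr = h ∘ Sum.inl ∘ π) :=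
          fun π hπ => ex ⟨π, hπ⟩
        simp only [this, and_false, if_false, Finset.sum_const_zero, sub_zero]
        by_cases i2 : Function.Injective (h ∘ Sum.inr)
        swap
        · rw [q2' _ (fun hc => i2 (by
            intro x y hxy
            exact hc (congrArg (Sum.inl : Fin n → Fin n ⊕ (Fin k ⊕ Fin k)) hxy)))]
          simpa using hη
        by_cases hr : ∀ i, h (Sum.inr i) ∈ Set.range (h ∘ Sum.inl)
        · exfalso
          choose p hp using hr
          have pinj : Function.Injective p := by
            intro x y hxy
            apply i2
            change h (Sum.inr x) = h (Sum.inr y)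
            rw [← hp, ← hp, hxy]
          refine ex ⟨Equiv.ofBijective p (Finite.injective_iff_bijective.1 pinj), ?_⟩
          funext x
          exact (hp x).symm
        · push Not at hr
          obtain ⟨i, hi⟩ := hr
          refine q4 _ i ?_
          rintro ⟨j, hj⟩
          exact hi ⟨j, by simpa using hj⟩
    have e1 : D h = (sgnOf εt * q (locMap h εt) - ∑ π : Equiv.Perm (Fin k),
        if Function.Injective (h ∘ Sum.inl) ∧ h ∘ Sum.inr = h ∘ Sum.inl ∘ π then M π else 0)
        + ∑ ε ∈ Finset.univ.erase εt, sgnOf ε * q (locMap h ε) := by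
      simp only [hD]
      rw [← Finset.add_sum_erase _ _ (Finset.mem_univ εt)]
      ring
    rw [e1]
    refine (abs_add_le _ _).trans ?_
    have b3 : |∑ ε ∈ Finset.univ.erase εt, sgnOf ε * q (locMap h ε)|
        ≤ (Finset.univ.erase εt).card * η := by
      refine (Finset.abs_sum_le_sum_abs _ _).trans ?_
      rw [← nsmul_eq_mul]
      exact Finset.sum_le_card_nsmul _ _ _ fun ε hε => b1 ε (Finset.ne_of_mem_erase hε)
    have hcard : ((Finset.univ.erase εt).card : ℝ) + 1 = 2 ^ (k + k) := by
      have := Finset.card_erase_add_one (Finset.mem_univ εt)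
      have h2 : (Finset.univ : Finset (Fin k ⊕ Fin k → Bool)).card = 2 ^ (k + k) := by
        simp
      rw [h2] at this
      exact_mod_cast this
    rw [← hcard]
    linarith
  refine (Finset.abs_sum_le_sum_abs _ _).trans ?_
  calc ∑ h, |D h| = ∑ h ∈ Finset.univ.filter fun h : Fin k ⊕ Fin k → Fin n =>
        ∀ s, ∃ t, t ≠ s ∧ h t = h s, |D h| := by
        symm
        apply Finset.sum_subset (Finset.subset_univ _)
        intro h _ hh
        rw [hD0 h (by simpa using hh), abs_zero]
    _ ≤ (Finset.univ.filter fun h : Fin k ⊕ Fin k → Fin n =>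
        ∀ s, ∃ t, t ≠ s ∧ h t = h s).card * (2 ^ (k + k) * η) := by
        rw [← nsmul_eq_mul]
        exact Finset.sum_le_card_nsmul _ _ _ fun h _ => hDb h
    _ ≤ _ := by
        gcongr
        exact card_noSingle n k

end Part3

section Part4

variable {E : Type*} [MeasurableSpace E]

lemma aux_elim {A B : Type*} [Fintype A] [Fintype B] (P : Measure E) [IsProbabilityMeasure P] :
    MeasurePreserving (fun p : (A → E) × (B → E) => (Sum.elim p.1 p.2 : A ⊕ B → E))
      ((Measure.pi fun _ : A => P).prod (Measure.pi fun _ : B => P))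
      (Measure.pi fun _ : A ⊕ B => P) := by
  have := measurePreserving_sumPiEquivProdPi_symm (X := fun _ : A ⊕ B => E) (fun _ => P)
  convert this using 1
  funext p
  funext s
  rcases s with i | i <;> rfl

/-- Position of the `k` slots in the sample enlarged by `k` independent copies. -/
def locOne {n k : ℕ} (j : Fin k → Fin n) (ε : Fin k → Bool) : Fin k → Fin n ⊕ Fin k :=
  fun i => if ε i = true then Sum.inl (j i) else Sum.inr i

/-- The elementary integrals in the expansion of the multiple empirical integral. -/
noncomputable def elemInt {n k : ℕ} (P : Measure E) (F : (Fin k → E) → ℝ)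
    (α : Fin k → Fin n ⊕ Fin k) (x : Fin n → E) : ℝ :=
  ∫ y, F (Sum.elim x y ∘ α) ∂(Measure.pi fun _ : Fin k => P)

instance mixMeasure_finite (P : Measure E) [IsProbabilityMeasure P] (n : ℕ) (x : Fin n → E)
    (b : Bool) : IsFiniteMeasure (mixMeasure P n x b) := by
  cases b
  · unfold mixMeasure; infer_instance
  · unfold mixMeasure; infer_instance

lemma measurable_elim_comp {n k : ℕ} (x : Fin n → E) (α : Fin k → Fin n ⊕ Fin k) :
    Measurable (fun y : Fin k → E => (Sum.elim x y ∘ α : Fin k → E)) := by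
  rw [measurable_pi_iff]
  intro i
  simp only [Function.comp_apply]
  rcases α i with j | j
  · exact measurable_const
  · exact measurable_pi_apply j

lemma pi_mix {n k : ℕ} (P : Measure E) [IsProbabilityMeasure P] (x : Fin n → E)
    (ε : Fin k → Bool) :
    Measure.pi (fun i => mixMeasure P n x (ε i)) =
      ∑ j : Fin k → Fin n, Measure.map (fun y => (Sum.elim x y ∘ locOne j ε : Fin k → E))
        (Measure.pi fun _ : Fin k => P) := by
  classical
  refine Measure.pi_eq fun s hs => ?_
  rw [Measure.finsetSum_apply]
  have h1 : ∀ j : Fin k → Fin n, Measure.map (fun y => (Sum.elim x y ∘ locOne j ε : Fin k → E))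
        (Measure.pi fun _ : Fin k => P) (Set.univ.pi s)
      = ∏ i, (if ε i = true then Measure.dirac (x (j i)) else P) (s i) := by
    intro j
    rw [Measure.map_apply (measurable_elim_comp x _) (MeasurableSet.univ_pi hs)]
    have : (fun y => (Sum.elim x y ∘ locOne j ε : Fin k → E)) ⁻¹' (Set.univ.pi s)
        = Set.univ.pi fun i => if ε i = true then {_y : E | x (j i) ∈ s i} else s i := by
      ext y
      simp only [Set.mem_preimage, Set.mem_pi, Set.mem_univ, true_imp_iff, Function.comp_apply]
      refine forall_congr' fun i => ?_
      cases h : ε i <;> simp [locOne, h]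
    rw [this, Measure.pi_pi]
    refine Finset.prod_congr rfl fun i _ => ?_
    cases h : ε i
    · simp
    · simp only [if_true]
      rw [Measure.dirac_apply' _ (hs i)]
      by_cases hx : x (j i) ∈ s i <;> simp [hx]
  simp only [h1]
  rw [← Fintype.prod_sum (fun i (l : Fin n) =>
    (if ε i = true then Measure.dirac (x l) else P) (s i))]
  refine Finset.prod_congr rfl fun i _ => ?_
  cases h : ε i
  · simp [mixMeasure]
  · simp [mixMeasure, Measure.finsetSum_apply]

lemma ae_real {n k : ℕ} (P : Measure E) [IsProbabilityMeasure P] (a : ℝ)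
    (f F : (Fin k → E) → ℝ) (hFm : Measurable F)
    (hF0 : ∀ u, ¬ Function.Injective u → F u = 0)
    (hF : MemLp F 2 (Measure.pi fun _ : Fin k => P))
    (hinj : MeasurableSet {u : Fin k → E | Function.Injective u})
    (N : Set (Fin k → E)) (hN : MeasurableSet N) (hNi : ∀ u ∈ N, Function.Injective u)
    (hN0 : Measure.pi (fun _ : Fin k => P) N = 0)
    (hNf : ∀ u, u ∉ N → {u : Fin k → E | Function.Injective u}.indicator f u = F u) :
    ∀ᵐ x ∂(Measure.pi fun _ : Fin n => P), empInt P n a x k f =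
      (Real.sqrt a)⁻¹ ^ k * ∑ ε : Fin k → Bool, sgnOf ε *
        ∑ j : Fin k → Fin n, elemInt P F (locOne j ε) x := by
  classical
  have hae : ∀ α : Fin k → Fin n ⊕ Fin k, ∀ᵐ x ∂(Measure.pi fun _ : Fin n => P),
      (∀ᵐ y ∂(Measure.pi fun _ : Fin k => P), (Sum.elim x y ∘ α : Fin k → E) ∉ N) ∧
      Integrable (fun y => F (Sum.elim x y ∘ α)) (Measure.pi fun _ : Fin k => P) := by
    intro α
    have hw : ∀ᵐ w ∂(Measure.pi fun _ : Fin n ⊕ Fin k => P), w ∘ α ∉ N := by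
      by_cases hα : Function.Injective α
      · have h0 : ∀ᵐ u ∂(Measure.pi fun _ : Fin k => P), u ∉ N := measure_eq_zero_iff_ae_notMem.1 hN0
        exact (aux_mp P α hα).quasiMeasurePreserving.ae h0
      · refine Eventually.of_forall fun w hw => hα ?_
        exact Function.Injective.of_comp (hNi _ hw)
    have h1 := (aux_elim (A := Fin n) (B := Fin k) P).quasiMeasurePreserving.ae hw
    have h2 := Measure.ae_ae_of_ae_prod h1
    have h3 : Integrable (fun w : Fin n ⊕ Fin k → E => F (w ∘ α))
        (Measure.pi fun _ : Fin n ⊕ Fin k => P) :=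
      (aux_memLp P F hF0 hF α).integrable (by norm_num)
    have h4 := (aux_elim (A := Fin n) (B := Fin k) P).integrable_comp_of_integrable h3
    have h5 := h4.prod_right_ae
    filter_upwards [h2, h5] with x hx hx'
    exact ⟨hx, hx'⟩
  have hall : ∀ᵐ x ∂(Measure.pi fun _ : Fin n => P), ∀ α : Fin k → Fin n ⊕ Fin k,
      (∀ᵐ y ∂(Measure.pi fun _ : Fin k => P), (Sum.elim x y ∘ α : Fin k → E) ∉ N) ∧
      Integrable (fun y => F (Sum.elim x y ∘ α)) (Measure.pi fun _ : Fin k => P) :=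
    ae_all_iff.2 hae
  filter_upwards [hall] with x hx
  unfold empInt
  congr 1
  refine Finset.sum_congr rfl fun ε _ => ?_
  unfold sgnOf
  congr 1
  rw [← integral_indicator hinj, pi_mix]
  have e1 : ∀ j : Fin k → Fin n,
      {u : Fin k → E | Function.Injective u}.indicator f =ᵐ[Measure.map
        (fun y => (Sum.elim x y ∘ locOne j ε : Fin k → E)) (Measure.pi fun _ : Fin k => P)] F := by
    intro j
    have : ∀ᵐ u ∂(Measure.map (fun y => (Sum.elim x y ∘ locOne j ε : Fin k → E))
        (Measure.pi fun _ : Fin k => P)), u ∉ N := by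
      rw [ae_map_iff (measurable_elim_comp x _).aemeasurable hN.compl]
      exact (hx _).1
    filter_upwards [this] with u hu using hNf u hu
  have e2 : ∀ j : Fin k → Fin n, Integrable F (Measure.map
        (fun y => (Sum.elim x y ∘ locOne j ε : Fin k → E)) (Measure.pi fun _ : Fin k => P)) := by
    intro j
    rw [integrable_map_measure hFm.aestronglyMeasurable (measurable_elim_comp x _).aemeasurable]
    exact (hx _).2
  rw [integral_finsetSum_measure fun j _ => (e2 j).congr (e1 j).symm]
  refine Finset.sum_congr rfl fun j _ => ?_
  rw [integral_congr_ae (e1 j), integral_map (measurable_elim_comp x _).aemeasurable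
    hFm.aestronglyMeasurable]
  rfl

/-- Joint moment of two kernels evaluated along prescribed sample positions. -/
noncomputable def qInt {n k : ℕ} (P : Measure E) (F G : (Fin k → E) → ℝ)
    (L : Fin k ⊕ Fin k → Fin n ⊕ (Fin k ⊕ Fin k)) : ℝ :=
  ∫ w, F (w ∘ (L ∘ Sum.inl)) * G (w ∘ (L ∘ Sum.inr))
    ∂(Measure.pi fun _ : Fin n ⊕ (Fin k ⊕ Fin k) => P)

lemma elem_mul {n k : ℕ} (P : Measure E) [IsProbabilityMeasure P]
    (F G : (Fin k → E) → ℝ)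
    (hF0 : ∀ u, ¬ Function.Injective u → F u = 0)
    (hG0 : ∀ u, ¬ Function.Injective u → G u = 0)
    (hF : MemLp F 2 (Measure.pi fun _ : Fin k => P))
    (hG : MemLp G 2 (Measure.pi fun _ : Fin k => P))
    (j j' : Fin k → Fin n) (ε ε' : Fin k → Bool) :
    Integrable (fun x => elemInt P F (locOne j ε) x * elemInt P G (locOne j' ε') x)
      (Measure.pi fun _ : Fin n => P) ∧
    ∫ x, elemInt P F (locOne j ε) x * elemInt P G (locOne j' ε') x
      ∂(Measure.pi fun _ : Fin n => P)
      = qInt P F G (locMap (Sum.elim j j') (Sum.elim ε ε')) := by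
  set L := locMap (Sum.elim j j') (Sum.elim ε ε') with hL
  have hmp : MeasurePreserving (fun p : (Fin n → E) × ((Fin k → E) × (Fin k → E)) =>
      (Sum.elim p.1 (Sum.elim p.2.1 p.2.2) : Fin n ⊕ (Fin k ⊕ Fin k) → E))
      ((Measure.pi fun _ : Fin n => P).prod
        ((Measure.pi fun _ : Fin k => P).prod (Measure.pi fun _ : Fin k => P)))
      (Measure.pi fun _ : Fin n ⊕ (Fin k ⊕ Fin k) => P) := by
    have h1 := (MeasurePreserving.id (Measure.pi fun _ : Fin n => P)).prod
      (aux_elim (A := Fin k) (B := Fin k) P)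
    exact (aux_elim (A := Fin n) (B := Fin k ⊕ Fin k) P).comp h1
  have hintg : Integrable (fun w => F (w ∘ (L ∘ Sum.inl)) * G (w ∘ (L ∘ Sum.inr)))
      (Measure.pi fun _ : Fin n ⊕ (Fin k ⊕ Fin k) => P) :=
    (aux_memLp P F hF0 hF _).integrable_mul (aux_memLp P G hG0 hG _)
  have e1 : ∀ (x : Fin n → E) (y z : Fin k → E),
      (Sum.elim x (Sum.elim y z) : Fin n ⊕ (Fin k ⊕ Fin k) → E) ∘ (L ∘ Sum.inl)
        = Sum.elim x y ∘ locOne j ε := by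
    intro x y z
    funext i
    cases h : ε i <;> simp [hL, locMap, locOne, h]
  have e2 : ∀ (x : Fin n → E) (y z : Fin k → E),
      (Sum.elim x (Sum.elim y z) : Fin n ⊕ (Fin k ⊕ Fin k) → E) ∘ (L ∘ Sum.inr)
        = Sum.elim x z ∘ locOne j' ε' := by
    intro x y z
    funext i
    cases h : ε' i <;> simp [hL, locMap, locOne, h]
  have hintg2 := hmp.integrable_comp_of_integrable hintg
  have e3 : ((fun w => F (w ∘ (L ∘ Sum.inl)) * G (w ∘ (L ∘ Sum.inr))) ∘
      fun p : (Fin n → E) × ((Fin k → E) × (Fin k → E)) =>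
      (Sum.elim p.1 (Sum.elim p.2.1 p.2.2) : Fin n ⊕ (Fin k ⊕ Fin k) → E))
      = fun p => F (Sum.elim p.1 p.2.1 ∘ locOne j ε) * G (Sum.elim p.1 p.2.2 ∘ locOne j' ε') := by
    funext p
    simp only [Function.comp_def] at e1 e2 ⊢
    rw [e1, e2]
  rw [e3] at hintg2
  have e4 : ∀ x : Fin n → E, ∫ yz : (Fin k → E) × (Fin k → E),
      F (Sum.elim x yz.1 ∘ locOne j ε) * G (Sum.elim x yz.2 ∘ locOne j' ε')
        ∂((Measure.pi fun _ : Fin k => P).prod (Measure.pi fun _ : Fin k => P))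
      = elemInt P F (locOne j ε) x * elemInt P G (locOne j' ε') x := by
    intro x
    exact integral_prod_mul (fun y => F (Sum.elim x y ∘ locOne j ε))
      (fun z => G (Sum.elim x z ∘ locOne j' ε'))
  constructor
  · have := hintg2.integral_prod_left
    simpa only [e4] using this
  · unfold qInt
    rw [← hmp.map_eq, integral_map hmp.measurable.aemeasurable
      (by rw [hmp.map_eq]; exact hintg.aestronglyMeasurable)]
    have := integral_prod _ hintg2
    simp only [e4] at this
    rw [← this]
    exact congrArg (fun φ => ∫ p, φ p ∂_) e3.symm

lemma sgnOf_elim {S T : Type*} [Fintype S] [Fintype T] (ε : S → Bool) (ε' : T → Bool) :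
    sgnOf (Sum.elim ε ε') = sgnOf ε * sgnOf ε' := by
  rw [sgnOf_eq_prod, sgnOf_eq_prod, sgnOf_eq_prod, Fintype.prod_sum_type]
  rfl

lemma sum_elim_pairs {S T κ : Type*} [Fintype S] [Fintype T] [Fintype κ] [DecidableEq S]
    [DecidableEq T] (φ : (S ⊕ T → κ) → ℝ) :
    ∑ h, φ h = ∑ j : S → κ, ∑ j' : T → κ, φ (Sum.elim j j') := by
  rw [← Equiv.sum_comp (Equiv.sumArrowEquivProdArrow S T κ).symm, Fintype.sum_prod_type]
  rfl

lemma expect_eq {Ω : Type*} [MeasurableSpace Ω] {n k : ℕ} (P : Measure E) [IsProbabilityMeasure P]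
    (Pr : Measure Ω) (X : Fin n → Ω → E) (hXm : ∀ j, Measurable (X j))
    (hlaw : Measure.map (fun ω j => X j ω) Pr = Measure.pi fun _ : Fin n => P)
    (a : ℝ) (ha : 0 < a)
    (f F : (Fin k → E) → ℝ) (g G : (Fin k → E) → ℝ)
    (hF0 : ∀ u, ¬ Function.Injective u → F u = 0)
    (hG0 : ∀ u, ¬ Function.Injective u → G u = 0)
    (hF : MemLp F 2 (Measure.pi fun _ : Fin k => P))
    (hG : MemLp G 2 (Measure.pi fun _ : Fin k => P))
    (hf : ∀ᵐ x ∂(Measure.pi fun _ : Fin n => P), empInt P n a x k f =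
      (Real.sqrt a)⁻¹ ^ k * ∑ ε : Fin k → Bool, sgnOf ε *
        ∑ j : Fin k → Fin n, elemInt P F (locOne j ε) x)
    (hg : ∀ᵐ x ∂(Measure.pi fun _ : Fin n => P), empInt P n a x k g =
      (Real.sqrt a)⁻¹ ^ k * ∑ ε : Fin k → Bool, sgnOf ε *
        ∑ j : Fin k → Fin n, elemInt P G (locOne j ε) x) :
    ∫ ω, empInt P n a (fun j => X j ω) k f * empInt P n a (fun j => X j ω) k g ∂Pr
      = a⁻¹ ^ k * ∑ h : Fin k ⊕ Fin k → Fin n, ∑ ε : Fin k ⊕ Fin k → Bool,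
        sgnOf ε * qInt P F G (locMap h ε) := by
  classical
  have hXm' : Measurable (fun ω j => X j ω) := measurable_pi_iff.2 hXm
  set Φ : (Fin n → E) → ℝ := fun x => a⁻¹ ^ k * ∑ j : Fin k → Fin n, ∑ j' : Fin k → Fin n,
    ∑ ε : Fin k → Bool, ∑ ε' : Fin k → Bool, sgnOf ε * sgnOf ε' *
      (elemInt P F (locOne j ε) x * elemInt P G (locOne j' ε') x) with hΦ
  have hsq : (Real.sqrt a)⁻¹ ^ k * (Real.sqrt a)⁻¹ ^ k = a⁻¹ ^ k := by
    rw [← mul_pow, ← mul_inv, Real.mul_self_sqrt ha.le]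
  have hfg : ∀ᵐ x ∂(Measure.pi fun _ : Fin n => P),
      empInt P n a x k f * empInt P n a x k g = Φ x := by
    filter_upwards [hf, hg] with x h1 h2
    rw [h1, h2, mul_mul_mul_comm, hsq, hΦ]
    congr 1
    have e1 : ∀ H : (Fin k → E) → ℝ, ∑ ε : Fin k → Bool, sgnOf ε *
        ∑ j : Fin k → Fin n, elemInt P H (locOne j ε) x
        = ∑ j : Fin k → Fin n, ∑ ε : Fin k → Bool, sgnOf ε * elemInt P H (locOne j ε) x := by
      intro H
      simp only [Finset.mul_sum]
      exact Finset.sum_comm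
    rw [e1, e1, Finset.sum_mul_sum]
    refine Finset.sum_congr rfl fun j _ => Finset.sum_congr rfl fun j' _ => ?_
    rw [Finset.sum_mul_sum]
    refine Finset.sum_congr rfl fun ε _ => Finset.sum_congr rfl fun ε' _ => ?_
    ring
  have hi : ∀ (j j' : Fin k → Fin n) (ε ε' : Fin k → Bool), Integrable (fun x =>
      sgnOf ε * sgnOf ε' * (elemInt P F (locOne j ε) x * elemInt P G (locOne j' ε') x))
      (Measure.pi fun _ : Fin n => P) := fun j j' ε ε' =>
    (elem_mul P F G hF0 hG0 hF hG j j' ε ε').1.const_mul _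
  have hi1 : ∀ (j j' : Fin k → Fin n) (ε : Fin k → Bool), Integrable (fun x =>
      ∑ ε' : Fin k → Bool,
      sgnOf ε * sgnOf ε' * (elemInt P F (locOne j ε) x * elemInt P G (locOne j' ε') x))
      (Measure.pi fun _ : Fin n => P) := fun j j' ε =>
    integrable_finsetSum _ fun ε' _ => hi j j' ε ε'
  have hi2 : ∀ (j j' : Fin k → Fin n), Integrable (fun x =>
      ∑ ε : Fin k → Bool, ∑ ε' : Fin k → Bool,
      sgnOf ε * sgnOf ε' * (elemInt P F (locOne j ε) x * elemInt P G (locOne j' ε') x))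
      (Measure.pi fun _ : Fin n => P) := fun j j' =>
    integrable_finsetSum _ fun ε _ => hi1 j j' ε
  have hi3 : ∀ (j : Fin k → Fin n), Integrable (fun x => ∑ j' : Fin k → Fin n,
      ∑ ε : Fin k → Bool, ∑ ε' : Fin k → Bool,
      sgnOf ε * sgnOf ε' * (elemInt P F (locOne j ε) x * elemInt P G (locOne j' ε') x))
      (Measure.pi fun _ : Fin n => P) := fun j =>
    integrable_finsetSum _ fun j' _ => hi2 j j'
  have hΦi : Integrable Φ (Measure.pi fun _ : Fin n => P) :=
    (integrable_finsetSum _ fun j _ => hi3 j).const_mul _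
  have s1 : ∫ ω, empInt P n a (fun j => X j ω) k f * empInt P n a (fun j => X j ω) k g ∂Pr
      = ∫ ω, Φ (fun j => X j ω) ∂Pr := by
    refine integral_congr_ae ?_
    rw [← hlaw] at hfg
    exact ae_of_ae_map hXm'.aemeasurable hfg
  have s2 : ∫ ω, Φ (fun j => X j ω) ∂Pr = ∫ x, Φ x ∂(Measure.pi fun _ : Fin n => P) := by
    rw [← hlaw, integral_map hXm'.aemeasurable (by rw [hlaw]; exact hΦi.aestronglyMeasurable)]
  rw [s1, s2, hΦ, integral_const_mul, sum_elim_pairs]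
  congr 1
  rw [integral_finsetSum _ fun j _ => hi3 j]
  refine Finset.sum_congr rfl fun j _ => ?_
  rw [integral_finsetSum _ fun j' _ => hi2 j j']
  refine Finset.sum_congr rfl fun j' _ => ?_
  rw [integral_finsetSum _ fun ε _ => hi1 j j' ε, sum_elim_pairs]
  refine Finset.sum_congr rfl fun ε _ => ?_
  rw [integral_finsetSum _ fun ε' _ => hi j j' ε ε']
  refine Finset.sum_congr rfl fun ε' _ => ?_
  rw [integral_const_mul, (elem_mul P F G hF0 hG0 hF hG j j' ε ε').2, sgnOf_elim]

end Part4
section Part5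

variable {E : Type*} [MeasurableSpace E]

lemma measurableSet_inj {k : ℕ} (hdiag : MeasurableSet {p : E × E | p.1 = p.2}) :
    MeasurableSet {u : Fin k → E | Function.Injective u} := by
  have : {u : Fin k → E | Function.Injective u}
      = ⋂ i : Fin k, ⋂ j : Fin k, {u : Fin k → E | u i = u j → i = j} := by
    ext u
    simp [Function.Injective]
  rw [this]
  refine MeasurableSet.iInter fun i => MeasurableSet.iInter fun j => ?_
  by_cases hij : i = j
  · simp [hij]
  · have h1 : {u : Fin k → E | u i = u j → i = j}
        = ((fun u : Fin k → E => (u i, u j)) ⁻¹' {p : E × E | p.1 = p.2})ᶜ := by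
      ext u
      simp [hij]
    rw [h1]
    exact (((measurable_pi_apply i).prodMk (measurable_pi_apply j)) hdiag).compl

lemma ae_inj {k : ℕ} (μ : Measure E) [SigmaFinite μ] [NullSingletonClass μ]
    (hdiag : MeasurableSet {p : E × E | p.1 = p.2}) :
    ∀ᵐ u ∂(Measure.pi fun _ : Fin k => μ), Function.Injective u := by
  have key : ∀ i j : Fin k, ∀ᵐ u ∂(Measure.pi fun _ : Fin k => μ), u i = u j → i = j := by
    intro i j
    by_cases hij : i = j
    · exact Eventually.of_forall fun u _ => hij
    rcases k with _ | m
    · exact i.elim0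
    obtain ⟨j', rfl⟩ := Fin.exists_succAbove_eq (Ne.symm hij)
    have hmp := measurePreserving_piFinSuccAbove (fun _ : Fin (m + 1) => μ) i
    have hms : MeasurableSet
        ((fun p : E × (Fin m → E) => (p.1, p.2 j')) ⁻¹' {p : E × E | p.1 = p.2}) :=
      (measurable_fst.prodMk ((measurable_pi_apply j').comp measurable_snd)) hdiag
    have hnull : (μ.prod (Measure.pi fun _ : Fin m => μ))
        ((fun p : E × (Fin m → E) => (p.1, p.2 j')) ⁻¹' {p : E × E | p.1 = p.2}) = 0 := by
      rw [Measure.prod_apply_symm hms]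
      have : ∀ y : Fin m → E, (fun x : E => (x, y)) ⁻¹'
          ((fun p : E × (Fin m → E) => (p.1, p.2 j')) ⁻¹' {p : E × E | p.1 = p.2}) = {y j'} := by
        intro y
        ext x
        simp
      simp [this]
    have h1 := hmp.quasiMeasurePreserving.ae (measure_eq_zero_iff_ae_notMem.1 hnull)
    filter_upwards [h1] with u hu huu
    exact absurd huu hu
  have := ae_all_iff.2 fun i => ae_all_iff.2 (key i)
  filter_upwards [this] with u hu i j h using hu i j h

lemma pi_perm {k : ℕ} (μ : Measure E) [SigmaFinite μ] (σ : Equiv.Perm (Fin k)) :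
    MeasurePreserving (fun u : Fin k → E => u ∘ σ) (Measure.pi fun _ : Fin k => μ)
      (Measure.pi fun _ : Fin k => μ) := by
  have := measurePreserving_piCongrLeft (α := fun _ : Fin k => E) (fun _ => μ) σ.symm
  convert this using 1
  funext u
  funext i
  obtain ⟨i, rfl⟩ := σ.symm.surjective i
  simp [MeasurableEquiv.piCongrLeft, Equiv.piCongrLeft]

lemma symm_identity {k : ℕ} (μ : Measure E) [SigmaFinite μ]
    (f g : (Fin k → E) → ℝ)
    (hf : MemLp f 2 (Measure.pi fun _ : Fin k => μ))
    (hg : MemLp g 2 (Measure.pi fun _ : Fin k => μ)) :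
    (k.factorial : ℝ) * ∫ u, symmetrize k f u * symmetrize k g u ∂(Measure.pi fun _ : Fin k => μ)
      = ∑ π : Equiv.Perm (Fin k), ∫ u, f u * g (u ∘ π) ∂(Measure.pi fun _ : Fin k => μ) := by
  have hk : (k.factorial : ℝ) ≠ 0 := by positivity
  have hintg : ∀ σ τ : Equiv.Perm (Fin k), Integrable (fun u => f (u ∘ σ) * g (u ∘ τ))
      (Measure.pi fun _ : Fin k => μ) := fun σ τ =>
    (hf.comp_measurePreserving (pi_perm μ σ)).integrable_mul
      (hg.comp_measurePreserving (pi_perm μ τ))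
  have e1 : ∀ u, symmetrize k f u * symmetrize k g u
      = (k.factorial : ℝ)⁻¹ * (k.factorial : ℝ)⁻¹ * ∑ σ : Equiv.Perm (Fin k),
        ∑ τ : Equiv.Perm (Fin k), f (u ∘ σ) * g (u ∘ τ) := by
    intro u
    rw [← Finset.sum_mul_sum]
    unfold symmetrize
    ring
  simp only [e1]
  rw [integral_const_mul, integral_finsetSum _ fun σ _ => integrable_finsetSum _ fun τ _ => hintg σ τ]
  have e2 : ∀ σ : Equiv.Perm (Fin k),
      ∫ u, ∑ τ : Equiv.Perm (Fin k), f (u ∘ σ) * g (u ∘ τ) ∂(Measure.pi fun _ : Fin k => μ)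
      = ∑ π : Equiv.Perm (Fin k), ∫ u, f u * g (u ∘ π) ∂(Measure.pi fun _ : Fin k => μ) := by
    intro σ
    rw [integral_finsetSum _ fun τ _ => hintg σ τ, ← Equiv.sum_comp (Equiv.mulLeft σ)]
    refine Finset.sum_congr rfl fun π _ => ?_
    have hmp := pi_perm μ σ
    have h1 : Integrable (fun u => f u * g (u ∘ π)) (Measure.pi fun _ : Fin k => μ) := by
      simpa using hintg 1 π
    conv_rhs => rw [← hmp.map_eq]
    rw [integral_map hmp.measurable.aemeasurable
      (by rw [hmp.map_eq]; exact h1.aestronglyMeasurable)]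
    rfl
  simp only [e2, Finset.sum_const, nsmul_eq_mul, Finset.card_univ, Fintype.card_perm,
    Fintype.card_fin]
  field_simp

lemma descFactorial_lim (k : ℕ) :
    Tendsto (fun n : ℕ => (n.descFactorial k : ℝ) / (n : ℝ) ^ k) atTop (𝓝 1) := by
  induction k with
  | zero => simp
  | succ k ih =>
    have h1 : Tendsto (fun n : ℕ => 1 - (k : ℝ) / n) atTop (𝓝 (1 - 0)) :=
      tendsto_const_nhds.sub (tendsto_const_div_atTop_nhds_zero_nat (k : ℝ))
    have h2 := h1.mul ih
    simp only [sub_zero, one_mul] at h2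
    refine h2.congr' ?_
    filter_upwards [eventually_ge_atTop (k + 1)] with n hn
    have hn0 : (n : ℝ) ≠ 0 := by
      have : 0 < n := by omega
      positivity
    rw [Nat.descFactorial_succ]
    push_cast [Nat.cast_sub (show k ≤ n by omega)]
    rw [pow_succ]
    field_simp

lemma exists_version {k : ℕ} (μ : Measure E) [SigmaFinite μ] [NullSingletonClass μ]
    (hdiag : MeasurableSet {p : E × E | p.1 = p.2}) (f : (Fin k → E) → ℝ)
    (hf : MemLp f 2 (Measure.pi fun _ : Fin k => μ)) :
    ∃ (F : (Fin k → E) → ℝ) (N : Set (Fin k → E)), Measurable F ∧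
      (∀ u, ¬ Function.Injective u → F u = 0) ∧ MemLp F 2 (Measure.pi fun _ : Fin k => μ) ∧
      F =ᵐ[Measure.pi fun _ : Fin k => μ] f ∧ MeasurableSet N ∧
      (∀ u ∈ N, Function.Injective u) ∧ Measure.pi (fun _ : Fin k => μ) N = 0 ∧
      (∀ u, u ∉ N → {u : Fin k → E | Function.Injective u}.indicator f u = F u) := by
  classical
  have hinj := measurableSet_inj (k := k) hdiag
  set S := {u : Fin k → E | Function.Injective u} with hS
  set B := {u | f u ≠ hf.1.mk f u} with hB
  have hB0 : Measure.pi (fun _ : Fin k => μ) B = 0 := hf.1.ae_eq_mk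
  have hFf : S.indicator (hf.1.mk f) =ᵐ[Measure.pi fun _ : Fin k => μ] f := by
    filter_upwards [ae_inj (k := k) μ hdiag, hf.1.ae_eq_mk] with u hu hu2
    rw [Set.indicator_of_mem (show u ∈ S from hu), hu2]
  refine ⟨S.indicator (hf.1.mk f), toMeasurable (Measure.pi fun _ : Fin k => μ) B ∩ S,
    hf.1.stronglyMeasurable_mk.measurable.indicator hinj, ?_, (memLp_congr_ae hFf).2 hf, hFf,
    (measurableSet_toMeasurable _ _).inter hinj, fun u hu => hu.2, ?_, ?_⟩
  · intro u hu
    exact Set.indicator_of_notMem hu _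
  · refine measure_mono_null Set.inter_subset_left ?_
    rw [measure_toMeasurable, hB0]
  · intro u hu
    by_cases huS : u ∈ S
    · rw [Set.indicator_of_mem huS, Set.indicator_of_mem huS]
      by_contra hne
      exact hu ⟨subset_toMeasurable _ _ hne, huS⟩
    · rw [Set.indicator_of_notMem huS, Set.indicator_of_notMem huS]

end Part5
/-- Under Assumption 2.1, for the multiple empirical integrals of the
triangular array, for every `k ≥ 0` and `f, g ∈ L²(μ^k)`,
`𝔼[I_k^{(n)}(f) I_k^{(n)}(g)] → k! ⟨f̃, g̃⟩_{L²(μ^k)}`. -/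
theorem expectation_empInt_mul_tendsto_same_order
    {E Ω : Type*} [MeasurableSpace E] [MeasurableSpace Ω]
    (μ : Measure E) [SigmaFinite μ] [NullSingletonClass μ]
    (a : ℕ → ℝ) (P : ℕ → Measure E) [∀ n, IsProbabilityMeasure (P n)]
    (h21 : Assumption21 μ a P)
    (Pr : Measure Ω) [IsProbabilityMeasure Pr]
    (X : (n : ℕ) → Fin n → Ω → E)
    (hXmeas : ∀ n j, Measurable (X n j))
    (hXlaw : ∀ n : ℕ, 1 ≤ n → ∀ j, Measure.map (X n j) Pr = P n)
    (hXindep : ∀ n : ℕ, iIndepFun (X n) Pr)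
    (hdiag : MeasurableSet {p : E × E | p.1 = p.2})
    (k : ℕ) (f g : (Fin k → E) → ℝ)
    (hf : MemLp f 2 (Measure.pi fun _ : Fin k => μ))
    (hg : MemLp g 2 (Measure.pi fun _ : Fin k => μ)) :
    Tendsto (fun n : ℕ =>
        ∫ ω, empInt (P n) n (a n) (fun j => X n j ω) k f *
          empInt (P n) n (a n) (fun j => X n j ω) k g ∂Pr)
      atTop
      (𝓝 ((k.factorial : ℝ) *
        ∫ u, symmetrize k f u * symmetrize k g u ∂(Measure.pi fun _ : Fin k => μ))) := by
  classical
  obtain ⟨-, ha, -, -, -, -⟩ := id h21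
  obtain ⟨r, hrm, hr, hrd, hr1⟩ := aux_density μ a P h21
  have hinj := measurableSet_inj (k := k) hdiag
  obtain ⟨F, N, hFm, hF0, hF, hFf, hN, hNi, hN0, hNf⟩ := exists_version μ hdiag f hf
  obtain ⟨G, N2, hGm, hG0, hG, hGg, hN2, hN2i, hN20, hN2g⟩ := exists_version μ hdiag g hg
  have hle : ∀ n : ℕ, 1 ≤ n → Measure.pi (fun _ : Fin k => P n) ≤
      ENNReal.ofReal ((a n / n) ^ k) • Measure.pi fun _ : Fin k => μ := by
    intro n hn
    have hn0 : (0 : ℝ) < n := by exact_mod_cast hn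
    have := aux_pi_le' (k := k) μ (P n) (n / a n) (div_pos hn0 (ha n hn)) (r n) (hrm n) (hr n)
      (hrd n hn)
    rwa [inv_div] at this
  have hle1 : ∀ n : ℕ, 1 ≤ n → ENNReal.ofReal ((n : ℝ) / a n) • P n ≤ μ := by
    intro n hn
    rw [hrd n hn]
    calc μ.withDensity (fun x => ENNReal.ofReal (r n x)) ≤ μ.withDensity 1 :=
          withDensity_mono (Eventually.of_forall fun x => by
            simpa using (hr n x).2)
      _ = μ := withDensity_one
  have hFP : ∀ n : ℕ, 1 ≤ n → MemLp F 2 (Measure.pi fun _ : Fin k => P n) := fun n hn =>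
    hF.of_measure_le_smul ENNReal.ofReal_ne_top (hle n hn)
  have hGP : ∀ n : ℕ, 1 ≤ n → MemLp G 2 (Measure.pi fun _ : Fin k => P n) := fun n hn =>
    hG.of_measure_le_smul ENNReal.ofReal_ne_top (hle n hn)
  have hac : ∀ n : ℕ, 1 ≤ n → (Measure.pi fun _ : Fin k => P n) ≪ Measure.pi fun _ : Fin k => μ :=
    fun n hn => Measure.absolutelyContinuous_of_le_smul (hle n hn)
  -- the main term
  set B : ℕ → ℝ := fun n => ((n.descFactorial k : ℝ) / (n : ℝ) ^ k) *
    ∑ π : Equiv.Perm (Fin k), ((n : ℝ) / a n) ^ k *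
      ∫ u, F u * G (u ∘ π) ∂(Measure.pi fun _ : Fin k => P n) with hB
  have hBlim : Tendsto B atTop (𝓝 ((k.factorial : ℝ) *
      ∫ u, symmetrize k f u * symmetrize k g u ∂(Measure.pi fun _ : Fin k => μ))) := by
    rw [symm_identity μ f g hf hg]
    have e1 : ∀ π : Equiv.Perm (Fin k),
        ∫ u, f u * g (u ∘ π) ∂(Measure.pi fun _ : Fin k => μ)
        = ∫ u, F u * G (u ∘ π) ∂(Measure.pi fun _ : Fin k => μ) := by
      intro π
      refine integral_congr_ae ?_
      filter_upwards [hFf, (pi_perm μ π).quasiMeasurePreserving.ae hGg] with u h1 h2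
      rw [h1, h2]
    simp only [e1]
    have h1 := (descFactorial_lim k).mul (tendsto_finsetSum Finset.univ
      fun (π : Equiv.Perm (Fin k)) _ => aux_integral_lim (k := k) μ a P ha r hrm hr hrd hr1
        (fun u => F u * G (u ∘ π))
        (hF.integrable_mul (hG.comp_measurePreserving (pi_perm μ π))))
    simpa only [one_mul] using h1
  -- the error term
  have herr : ∀ δ : ℝ, 0 < δ → ∀ᶠ n : ℕ in atTop,
      |(∫ ω, empInt (P n) n (a n) (fun j => X n j ω) k f *
          empInt (P n) n (a n) (fun j => X n j ω) k g ∂Pr) - B n|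
        ≤ (k : ℝ) ^ (k + k) * 2 ^ (k + k) * δ := by
    intro δ hδ
    filter_upwards [eventually_ge_atTop 1,
      aux_small_lim μ a P h21 hle hle1 F G hFm hGm hF0 hG0 hF hG δ hδ,
      aux_small_lim μ a P h21 hle hle1 G F hGm hFm hG0 hF0 hG hF δ hδ] with n hn hs1 hs2
    have hn0 : (0 : ℝ) < n := by exact_mod_cast hn
    have han := ha n hn
    have hlaw : Measure.map (fun ω j => X n j ω) Pr = Measure.pi fun _ : Fin n => P n := by
      rw [(iIndepFun_iff_map_fun_eq_pi_map fun j => (hXmeas n j).aemeasurable).1 (hXindep n)]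
      simp only [hXlaw n hn]
    rw [expect_eq (P n) Pr (X n) (hXmeas n) hlaw (a n) han f F g G hF0 hG0 (hFP n hn) (hGP n hn)
      (ae_real (P n) (a n) f F hFm hF0 (hFP n hn) hinj N hN hNi (hac n hn hN0) hNf)
      (ae_real (P n) (a n) g G hGm hG0 (hGP n hn) hinj N2 hN2 hN2i (hac n hn hN20) hN2g)]
    have hη : 0 ≤ (a n / n) ^ k * δ := by positivity
    have hc := comb_main n k (qInt (P n) F G)
      (fun π => ∫ u, F u * G (u ∘ π) ∂(Measure.pi fun _ : Fin k => P n)) ((a n / n) ^ k * δ) hη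
      ?_ ?_ ?_ ?_ ?_ ?_
    · have e1 : B n = (a n)⁻¹ ^ k * (n.descFactorial k * ∑ π : Equiv.Perm (Fin k),
          ∫ u, F u * G (u ∘ π) ∂(Measure.pi fun _ : Fin k => P n)) := by
        simp only [hB]
        rw [← Finset.mul_sum, div_pow, inv_pow]
        field_simp
      rw [e1, ← mul_sub, abs_mul, abs_of_nonneg (by positivity : (0 : ℝ) ≤ (a n)⁻¹ ^ k)]
      refine (mul_le_mul_of_nonneg_left hc (by positivity)).trans (le_of_eq ?_)
      push_cast
      rw [div_pow, inv_pow]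
      field_simp
    · intro τ L
      have hmp := aux_mp (P n) (τ : Fin n ⊕ (Fin k ⊕ Fin k) → Fin n ⊕ (Fin k ⊕ Fin k)) τ.injective
      unfold qInt
      have hintg : Integrable (fun w => F (w ∘ (L ∘ Sum.inl)) * G (w ∘ (L ∘ Sum.inr)))
          (Measure.pi fun _ : Fin n ⊕ (Fin k ⊕ Fin k) => P n) :=
        (aux_memLp (P n) F hF0 (hFP n hn) _).integrable_mul
          (aux_memLp (P n) G hG0 (hGP n hn) _)
      conv_rhs => rw [← hmp.map_eq]
      rw [integral_map hmp.measurable.aemeasurable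
        (by rw [hmp.map_eq]; exact hintg.aestronglyMeasurable)]
      rfl
    · intro L hL
      unfold qInt
      have : ∀ w : Fin n ⊕ (Fin k ⊕ Fin k) → E, F (w ∘ (L ∘ Sum.inl)) = 0 := fun w =>
        hF0 _ fun hc => hL (Function.Injective.of_comp hc)
      simp [this]
    · intro L hL
      unfold qInt
      have : ∀ w : Fin n ⊕ (Fin k ⊕ Fin k) → E, G (w ∘ (L ∘ Sum.inr)) = 0 := fun w =>
        hG0 _ fun hc => hL (Function.Injective.of_comp hc)
      simp [this]
    · intro L π hLi hLπ
      unfold qInt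
      have hmp := aux_mp (P n) (L ∘ Sum.inl) hLi
      have hintg : Integrable (fun u => F u * G (u ∘ π)) (Measure.pi fun _ : Fin k => P n) :=
        (hFP n hn).integrable_mul ((hGP n hn).comp_measurePreserving (pi_perm (P n) π))
      rw [hLπ]
      rw [← hmp.map_eq, integral_map hmp.measurable.aemeasurable
        (by rw [hmp.map_eq]; exact hintg.aestronglyMeasurable)]
      rfl
    · intro L i hi
      exact hs1 _ (L ∘ Sum.inl) (L ∘ Sum.inr) i hi
    · intro L i hi
      have := hs2 _ (L ∘ Sum.inr) (L ∘ Sum.inl) i hi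
      unfold qInt
      simpa only [mul_comm] using this
  have hdiff : Tendsto (fun n : ℕ => (∫ ω, empInt (P n) n (a n) (fun j => X n j ω) k f *
          empInt (P n) n (a n) (fun j => X n j ω) k g ∂Pr) - B n) atTop (𝓝 0) := by
    rw [Metric.tendsto_nhds]
    intro e he
    set C : ℝ := (k : ℝ) ^ (k + k) * 2 ^ (k + k) with hC
    have hC0 : 0 ≤ C := by positivity
    filter_upwards [herr (e / (C + 1)) (by positivity)] with n hn
    rw [Real.dist_eq, sub_zero]
    refine hn.trans_lt ?_
    rw [mul_div_assoc', div_lt_iff₀ (by positivity)]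
    nlinarith
  simpa using hdiff.add hBlim
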